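/- Let W be a group generated by a finite set S, and let (V, ρ) be an n-dimensional irreducible reflection representation of (W, S) over a field of characteristic 0. Then for every 0 ≤ d ≤ n, the d-th exterior power Λ^d V is an irreducible W-module. -/

import Mathlib

open ExteriorAlgebra Module

section Preamble

/-- A linear endomorphism is diagonalizable if its eigenspaces span the whole space. -/
def IsDiagonalizable {F V : Type*} [Field F] [AddCommGroup V] [Module F V]
    (s : Module.End F V) : Prop :=
  (⨆ μ : F, Module.End.eigenspace s μ) = ⊤

/-- A generalized reflection: a diagonalizable endomorphism with `rank (s - id) = 1`. -/
def IsGenReflection {F V : Type*} [Field F] [AddCommGroup V] [Module F V]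
    (s : Module.End F V) : Prop :=
  IsDiagonalizable s ∧ Module.finrank F (LinearMap.range (s - 1)) = 1

/-- A reflection vector of `s`: a nonzero vector in the image of `s - id`. -/
def IsReflVector {F V : Type*} [Field F] [AddCommGroup V] [Module F V]
    (s : Module.End F V) (a : V) : Prop :=
  a ≠ 0 ∧ a ∈ LinearMap.range (s - 1)

lemma map_mem_exteriorPower {R M N : Type*} [CommRing R] [AddCommGroup M] [Module R M]
    [AddCommGroup N] [Module R N] (d : ℕ) (f : M →ₗ[R] N) {x : ExteriorAlgebra R M}
    (hx : x ∈ ⋀[R]^d M) : ExteriorAlgebra.map f x ∈ ⋀[R]^d N := by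
  rw [← ιMulti_span_fixedDegree] at hx ⊢
  induction hx using Submodule.span_induction with
  | mem x hx =>
      obtain ⟨m, rfl⟩ := hx
      rw [map_apply_ιMulti]
      exact Submodule.subset_span ⟨_, rfl⟩
  | zero => simp
  | add x y _ _ hx hy => rw [map_add]; exact Submodule.add_mem _ hx hy
  | smul c x _ hx => rw [map_smul]; exact Submodule.smul_mem _ _ hx

/-- The linear map induced on `d`-th exterior powers by a linear map. -/
def extMap {R M N : Type*} [CommRing R] [AddCommGroup M] [Module R M]
    [AddCommGroup N] [Module R N] (d : ℕ) (f : M →ₗ[R] N) :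
    ⋀[R]^d M →ₗ[R] ⋀[R]^d N :=
  ((ExteriorAlgebra.map f).toLinearMap.domRestrict (⋀[R]^d M)).codRestrict (⋀[R]^d N)
    (fun x => map_mem_exteriorPower d f x.2)

/-- The wedge `v 0 ∧ ⋯ ∧ v (d-1)` as an element of the `d`-th exterior power. -/
def wedge {R M : Type*} [CommRing R] [AddCommGroup M] [Module R M] (d : ℕ)
    (v : Fin d → M) : ⋀[R]^d M :=
  ⟨ιMulti R d v, ιMulti_range R d (Set.mem_range_self v)⟩

end Preamble

/-!
A generalized reflection has the form `r v = v + f v • a` with `f a ≠ 0`, and on the exterior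
algebra it acts as `1 + D f a`, where `D f a x = a ∧ (f ⌋ x)`. Let `U` be a subspace of the
exterior algebra stable under all the `D (f i) (a i)`. Taking products and commutators of these
operators shows that the vectors `b` for which `D (f i) b` preserves `U` form a subspace of `V`
stable under all reflections; it contains `a i ≠ 0`, so by irreducibility it is all of `V`.
Likewise the `f i` have no common zero, so that every nonzero element of positive degree has a
nonzero contraction by some `f i`. Let `y ≠ 0` have degree `d` and `⋀ᵐ V ∧ y ⊆ U`. By the
Leibniz rule, applying `D (f i) b` to `⋀ᵐ V ∧ y` for all `b` gives `⋀ᵐ⁺¹ V ∧ (f i ⌋ y) ⊆ U`.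
Starting from `m = 0` and `y ∈ U`, we contract `y` down to a nonzero scalar and find `⋀ᵈ V ⊆ U`.
-/

open CliffordAlgebra (contractLeft contractLeft_ι_mul contractLeft_algebraMap involute)

section CommRing

variable {R M : Type*} [CommRing R] [AddCommGroup M] [Module R M]

lemma contractLeft_mul {Q : QuadraticForm R M} (f : Dual R M) (x y : CliffordAlgebra Q) :
    contractLeft f (x * y) = contractLeft f x * y + involute x * contractLeft f y := by
  induction x using CliffordAlgebra.left_induction with
  | algebraMap r =>
    simp only [CliffordAlgebra.contractLeft_algebraMap_mul, contractLeft_algebraMap, zero_mul,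
      zero_add, AlgHom.commutes]
  | add x x' hx hx' =>
    simp only [add_mul, map_add, hx, hx']
    abel
  | ι_mul x a hx =>
    simp only [mul_assoc, contractLeft_ι_mul, hx, map_mul, CliffordAlgebra.involute_ι, sub_mul,
      mul_add, smul_mul_assoc, neg_mul]
    abel

lemma exteriorPower_succ_le_iff {d : ℕ} {P : Submodule R (ExteriorAlgebra R M)} :
    ⋀[R]^(d + 1) M ≤ P ↔ ∀ a, ∀ x ∈ ⋀[R]^d M, ι R a * x ∈ P := by
  rw [exteriorPower, pow_succ', Submodule.mul_le]
  exact Set.forall_mem_range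

lemma ι_mul_mem_exteriorPower {d : ℕ} (a : M) {x : ExteriorAlgebra R M} (hx : x ∈ ⋀[R]^d M) :
    ι R a * x ∈ ⋀[R]^(d + 1) M :=
  exteriorPower_succ_le_iff.1 le_rfl a x hx

lemma involute_of_mem_exteriorPower {d : ℕ} {x : ExteriorAlgebra R M} (hx : x ∈ ⋀[R]^d M) :
    involute x = (-1 : R) ^ d • x := by
  induction d generalizing x with
  | zero =>
    obtain ⟨r, rfl⟩ := Submodule.mem_one.1 hx
    rw [AlgHom.commutes, pow_zero, one_smul]
  | succ d ih =>
    suffices ⋀[R]^(d + 1) M ≤ LinearMap.eqLocus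
        (involute (Q := (0 : QuadraticForm R M))).toLinearMap
        ((-1 : R) ^ (d + 1) • LinearMap.id) from this hx
    refine exteriorPower_succ_le_iff.2 fun a x hx => ?_
    simp [LinearMap.mem_eqLocus, ih hx, pow_succ]

lemma contractLeft_mem_exteriorPower (f : Dual R M) {d : ℕ} {x : ExteriorAlgebra R M}
    (hx : x ∈ ⋀[R]^(d + 1) M) : contractLeft f x ∈ ⋀[R]^d M := by
  induction d generalizing x with
  | zero =>
    suffices ⋀[R]^(0 + 1) M ≤ (⋀[R]^0 M).comap (contractLeft f) from this hx
    refine exteriorPower_succ_le_iff.2 fun a x hx => ?_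
    obtain ⟨r, rfl⟩ := Submodule.mem_one.1 hx
    rw [Submodule.mem_comap, contractLeft_ι_mul, contractLeft_algebraMap, mul_zero, sub_zero]
    exact Submodule.smul_mem _ _ hx
  | succ d ih =>
    suffices ⋀[R]^(d + 1 + 1) M ≤ (⋀[R]^(d + 1) M).comap (contractLeft f) from this hx
    refine exteriorPower_succ_le_iff.2 fun a x hx => ?_
    rw [Submodule.mem_comap, contractLeft_ι_mul]
    exact sub_mem (Submodule.smul_mem _ _ hx) (ι_mul_mem_exteriorPower a (ih hx))

lemma ι_mul_ι_mul_comm (a b : M) (x : ExteriorAlgebra R M) :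
    ι R a * (ι R b * x) = -(ι R b * (ι R a * x)) := by
  rw [← mul_assoc, ← mul_assoc, eq_neg_iff_add_eq_zero, ← add_mul, ι_add_mul_swap, zero_mul]

lemma ι_mul_ι_mul_self (a : M) (x : ExteriorAlgebra R M) : ι R a * (ι R a * x) = 0 := by
  rw [← mul_assoc, ι_sq_zero, zero_mul]

/-- The derivation `x ↦ a ∧ (f ⌋ x)` of the exterior algebra, which extends the rank one
endomorphism `v ↦ f v • a`, as a bilinear function of `f` and `a`. -/
noncomputable def rankOneDerivation :
    Dual R M →ₗ[R] M →ₗ[R] Module.End R (ExteriorAlgebra R M) :=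
  ((LinearMap.mul R (Module.End R (ExteriorAlgebra R M))).compl₁₂
    (LinearMap.mul R (ExteriorAlgebra R M) ∘ₗ ι R) contractLeft).flip

lemma rankOneDerivation_apply (f : Dual R M) (a : M) (x : ExteriorAlgebra R M) :
    rankOneDerivation f a x = ι R a * contractLeft f x := rfl

lemma map_transvection_apply (f : Dual R M) (a : M) (x : ExteriorAlgebra R M) :
    ExteriorAlgebra.map (LinearMap.transvection f a) x = x + rankOneDerivation f a x := by
  induction x using CliffordAlgebra.left_induction with
  | algebraMap r => simp [rankOneDerivation_apply]
  | add x y hx hy =>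
    rw [map_add, hx, hy, map_add]
    abel
  | ι_mul x v hx =>
    rw [map_mul, hx, map_apply_ι, LinearMap.transvection.apply]
    simp only [rankOneDerivation_apply, contractLeft_ι_mul, map_add, map_smul, add_mul, mul_add,
      mul_sub, smul_mul_assoc, mul_smul_comm, ι_mul_ι_mul_self, smul_zero]
    rw [ι_mul_ι_mul_comm v a]
    abel

lemma rankOneDerivation_commutator (f g : Dual R M) (a b : M) :
    rankOneDerivation f a * rankOneDerivation g b -
        rankOneDerivation g b * rankOneDerivation f a =
      f b • rankOneDerivation g a - g a • rankOneDerivation f b := by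
  refine LinearMap.ext fun x => ?_
  simp only [LinearMap.sub_apply, LinearMap.smul_apply, Module.End.mul_apply,
    rankOneDerivation_apply, contractLeft_ι_mul, mul_sub, mul_smul_comm]
  rw [CliffordAlgebra.contractLeft_comm f g, ι_mul_ι_mul_comm a b]
  simp only [mul_neg, neg_neg]
  abel

lemma rankOneDerivation_mul_of_same_vector (f g : Dual R M) (a : M) :
    rankOneDerivation f a * rankOneDerivation g a = f a • rankOneDerivation g a := by
  refine LinearMap.ext fun x => ?_
  simp only [Module.End.mul_apply, LinearMap.smul_apply, rankOneDerivation_apply,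
    contractLeft_ι_mul, mul_sub, mul_smul_comm, ι_mul_ι_mul_self, sub_zero]

lemma rankOneDerivation_mul_of_same_form (f : Dual R M) (a b : M) :
    rankOneDerivation f a * rankOneDerivation f b = f b • rankOneDerivation f a := by
  refine LinearMap.ext fun x => ?_
  simp only [Module.End.mul_apply, LinearMap.smul_apply, rankOneDerivation_apply,
    contractLeft_ι_mul, CliffordAlgebra.contractLeft_contractLeft, mul_smul_comm, mul_zero,
    sub_zero]

/-- The subalgebra of endomorphisms that map a given submodule into itself. -/
def endStabilizer (U : Submodule R M) : Subalgebra R (Module.End R M) where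
  __ := U.compatibleMaps U
  mul_mem' hS hT := fun _ hx => hS (hT hx)
  algebraMap_mem' r := fun _ hx => U.smul_mem r hx

lemma exteriorPower_succ_mul_contractLeft_le {U : Submodule R (ExteriorAlgebra R M)}
    {f : Dual R M} (hU : ∀ a, rankOneDerivation f a ∈ endStabilizer U) {m : ℕ}
    {y : ExteriorAlgebra R M} (hy : ⋀[R]^m M ≤ U.comap (LinearMap.mulRight R y)) :
    ⋀[R]^(m + 1) M ≤ U.comap (LinearMap.mulRight R (contractLeft f y)) := by
  refine exteriorPower_succ_le_iff.2 fun a z hz => ?_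
  have leibniz : rankOneDerivation f a (z * y) =
      ι R a * contractLeft f z * y + (-1 : R) ^ m • (ι R a * z * contractLeft f y) := by
    rw [rankOneDerivation_apply, contractLeft_mul, involute_of_mem_exteriorPower hz]
    simp only [mul_add, mul_assoc, smul_mul_assoc, mul_smul_comm]
  have first_mem : ι R a * contractLeft f z * y ∈ U := by
    cases m with
    | zero =>
      obtain ⟨r, rfl⟩ := Submodule.mem_one.1 hz
      rw [contractLeft_algebraMap, mul_zero, zero_mul]
      exact U.zero_mem
    | succ m => exact hy (ι_mul_mem_exteriorPower a (contractLeft_mem_exteriorPower f hz))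
  have sum_mem : rankOneDerivation f a (z * y) ∈ U := hU a (hy hz)
  rw [leibniz, U.add_mem_iff_right first_mem] at sum_mem
  exact (U.smul_mem_iff_of_isUnit (isUnit_one.neg.pow m)).1 sum_mem

lemma exists_finset_map_eq_zero {N : Type*} [AddCommGroup N] [Module R N] {d : ℕ}
    {x : ExteriorAlgebra R M} (hx : x ∈ ⋀[R]^(d + 1) M) :
    ∃ S : Finset M, ∀ p : M →ₗ[R] N, (∀ v ∈ S, p v = 0) → ExteriorAlgebra.map p x = 0 := by
  classical
  rw [exteriorPower, pow_succ'] at hx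
  induction hx using Submodule.mul_induction_on' with
  | mem_mul_mem v hv y _ =>
    obtain ⟨a, rfl⟩ := hv
    refine ⟨{a}, fun p hp => ?_⟩
    rw [map_mul, map_apply_ι, hp a (Finset.mem_singleton_self a), map_zero, zero_mul]
  | add x _ y _ hx hy =>
    obtain ⟨S, hS⟩ := hx
    obtain ⟨T, hT⟩ := hy
    refine ⟨S ∪ T, fun p hp => ?_⟩
    rw [map_add, hS p fun v hv => hp v (Finset.mem_union_left T hv),
      hT p fun v hv => hp v (Finset.mem_union_right S hv), add_zero]

end CommRing

section Field

variable {F V κ : Type*} [Field F] [AddCommGroup V] [Module F V]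

lemma exists_map_eq_self_of_contractLeft_eq_zero {f : κ → Dual F V}
    (hf : ∀ v, (∀ i, f i v = 0) → v = 0) {x : ExteriorAlgebra F V}
    (hx : ∀ i, contractLeft (f i) x = 0) (S : Finset V) :
    ∃ p : V →ₗ[F] V, (∀ v ∈ S, p v = 0) ∧ ExteriorAlgebra.map p x = x := by
  classical
  induction S using Finset.induction_on with
  | empty => exact ⟨LinearMap.id, by simp, by simp⟩
  | insert v S _ ih =>
    obtain ⟨p, hpS, hpx⟩ := ih
    by_cases hpv : p v = 0
    · exact ⟨p, Finset.forall_mem_insert .. |>.2 ⟨hpv, hpS⟩, hpx⟩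
    obtain ⟨i, hi⟩ : ∃ i, f i (p v) ≠ 0 := not_forall.1 (mt (hf (p v)) hpv)
    -- `q` is a projection killing `p v`; as a transvection with form `f i` it fixes `x`.
    let q : V →ₗ[F] V := LinearMap.transvection (f i) (-(f i (p v))⁻¹ • p v)
    have hqv : q (p v) = 0 := by
      simp [q, LinearMap.transvection.apply, smul_smul, hi]
    have hqx : ExteriorAlgebra.map q x = x := by
      rw [map_transvection_apply, rankOneDerivation_apply, hx, mul_zero, add_zero]
    refine ⟨q ∘ₗ p, Finset.forall_mem_insert .. |>.2 ⟨hqv, fun w hw => ?_⟩, ?_⟩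
    · rw [LinearMap.comp_apply, hpS w hw, map_zero]
    · rw [← map_comp_map, AlgHom.comp_apply, hpx, hqx]

lemma exists_contractLeft_ne_zero {f : κ → Dual F V} (hf : ∀ v, (∀ i, f i v = 0) → v = 0)
    {d : ℕ} {x : ExteriorAlgebra F V} (hx : x ∈ ⋀[F]^(d + 1) V) (hx0 : x ≠ 0) :
    ∃ i, contractLeft (f i) x ≠ 0 := by
  by_contra! hfx
  obtain ⟨S, hS⟩ := exists_finset_map_eq_zero (N := V) hx
  obtain ⟨p, hpS, hpx⟩ := exists_map_eq_self_of_contractLeft_eq_zero hf hfx S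
  exact hx0 (hpx ▸ hS p hpS)

lemma exteriorPower_add_le_of_mul_mem {f : κ → Dual F V} (hf : ∀ v, (∀ i, f i v = 0) → v = 0)
    {U : Submodule F (ExteriorAlgebra F V)}
    (hU : ∀ i b, rankOneDerivation (f i) b ∈ endStabilizer U) {d m : ℕ} {y : ExteriorAlgebra F V}
    (hyd : y ∈ ⋀[F]^d V) (hy0 : y ≠ 0) (hyU : ⋀[F]^m V ≤ U.comap (LinearMap.mulRight F y)) :
    ⋀[F]^(m + d) V ≤ U := by
  induction d generalizing m y with
  | zero =>
    obtain ⟨r, rfl⟩ := Submodule.mem_one.1 hyd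
    have hr : r ≠ 0 := by
      rintro rfl
      exact hy0 (map_zero _)
    intro z hz
    have hrz : z * algebraMap F _ r ∈ U := hyU hz
    rwa [← Algebra.commutes, ← Algebra.smul_def, U.smul_mem_iff hr] at hrz
  | succ d ih =>
    obtain ⟨i, hi⟩ := exists_contractLeft_ne_zero hf hyd hy0
    rw [← Nat.add_assoc, Nat.add_right_comm]
    exact ih (contractLeft_mem_exteriorPower (f i) hyd) hi
      (exteriorPower_succ_mul_contractLeft_le (hU i) hyU)

lemma rankOneDerivation_smul_mem {A : Subalgebra F (Module.End F (ExteriorAlgebra F V))}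
    {f g : Dual F V} {a b : V} (hfa : f a ≠ 0) (hf : rankOneDerivation f a ∈ A)
    (hg : rankOneDerivation g b ∈ A) : rankOneDerivation g (f b • a) ∈ A := by
  have commutator_mem : f b • rankOneDerivation g a - g a • rankOneDerivation f b ∈ A := by
    rw [← rankOneDerivation_commutator]
    exact sub_mem (mul_mem hf hg) (mul_mem hg hf)
  have key : f a • rankOneDerivation g (f b • a) =
      rankOneDerivation f a * (f b • rankOneDerivation g a - g a • rankOneDerivation f b) +
        (g a * f b) • rankOneDerivation f a := by
    rw [mul_sub, mul_smul_comm, mul_smul_comm, rankOneDerivation_mul_of_same_vector,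
      rankOneDerivation_mul_of_same_form, map_smul]
    module
  have smul_mem : f a • rankOneDerivation g (f b • a) ∈ A :=
    key ▸ add_mem (mul_mem hf commutator_mem) (A.smul_mem hf _)
  exact (A.toSubmodule.smul_mem_iff hfa).1 smul_mem

section Irreducible

variable {f : κ → Dual F V} {a : κ → V} (hfa : ∀ i, f i (a i) ≠ 0)
  (hirr : ∀ N : Submodule F V, (∀ i, ∀ v ∈ N, LinearMap.transvection (f i) (a i) v ∈ N) →
    N = ⊥ ∨ N = ⊤)

include hfa hirr

lemma rankOneDerivation_mem_of_irreducible
    {A : Subalgebra F (Module.End F (ExteriorAlgebra F V))}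
    (hA : ∀ i, rankOneDerivation (f i) (a i) ∈ A) (i : κ) (b : V) :
    rankOneDerivation (f i) b ∈ A := by
  let N : Submodule F V := A.toSubmodule.comap (rankOneDerivation (f i))
  have mem_N : a i ∈ N := hA i
  have N_stable : ∀ j, ∀ v ∈ N, LinearMap.transvection (f j) (a j) v ∈ N := fun j v hv =>
    N.add_mem hv (rankOneDerivation_smul_mem (hfa j) (hA j) hv)
  have N_ne_bot : N ≠ ⊥ :=
    N.ne_bot_iff.2 ⟨a i, mem_N, fun h => hfa i (by rw [h, map_zero])⟩
  have N_eq_top : N = ⊤ := (hirr N N_stable).resolve_left N_ne_bot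
  exact N_eq_top.ge (Submodule.mem_top (x := b))

lemma eq_zero_of_forall_form_eq_zero [Nonempty κ] (v : V) (hv : ∀ i, f i v = 0) : v = 0 := by
  let K : Submodule F V := ⨅ i, LinearMap.ker (f i)
  have mem_K : ∀ {u}, u ∈ K ↔ ∀ i, f i u = 0 := by simp [K]
  have K_stable : ∀ i, ∀ u ∈ K, LinearMap.transvection (f i) (a i) u ∈ K := fun i u hu => by
    rwa [LinearMap.transvection.apply, mem_K.1 hu i, zero_smul, add_zero]
  have K_ne_top : K ≠ ⊤ := fun h =>
    have i := Classical.arbitrary κ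
    hfa i (mem_K.1 (h ▸ Submodule.mem_top : a i ∈ K) i)
  have K_eq_bot : K = ⊥ := (hirr K K_stable).resolve_right K_ne_top
  exact (Submodule.mem_bot F).1 (K_eq_bot ▸ mem_K.2 hv)

theorem exteriorPower_le_of_map_transvection_mem [Nonempty κ]
    {U : Submodule F (ExteriorAlgebra F V)}
    (hU : ∀ i, ∀ x ∈ U, ExteriorAlgebra.map (LinearMap.transvection (f i) (a i)) x ∈ U)
    {d : ℕ} {x : ExteriorAlgebra F V} (hx : x ∈ U) (hxd : x ∈ ⋀[F]^d V) (hx0 : x ≠ 0) :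
    ⋀[F]^d V ≤ U := by
  have generators_mem : ∀ i, rankOneDerivation (f i) (a i) ∈ endStabilizer U := fun i y hy => by
    have := hU i y hy
    rwa [map_transvection_apply, U.add_mem_iff_right hy] at this
  have mul_mem : ⋀[F]^0 V ≤ U.comap (LinearMap.mulRight F x) := by
    rw [exteriorPower, pow_zero, Submodule.one_le]
    simpa using hx
  simpa using exteriorPower_add_le_of_mul_mem (eq_zero_of_forall_form_eq_zero hfa hirr)
    (rankOneDerivation_mem_of_irreducible hfa hirr generators_mem) hxd hx0 mul_mem

end Irreducible

lemma IsDiagonalizable.apply_ne_zero_of_eq_transvection {f : Dual F V} {a : V}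
    (hdiag : IsDiagonalizable (LinearMap.transvection f a)) (hf : f ≠ 0) (ha : a ≠ 0) :
    f a ≠ 0 := fun hfa => by
  have eigenspace_le_ker : ∀ μ : F,
      Module.End.eigenspace (LinearMap.transvection f a) μ ≤ LinearMap.ker f := fun μ v hv => by
    rw [Module.End.mem_eigenspace_iff, LinearMap.transvection.apply] at hv
    have hfv : f v = μ * f v := by simpa [hfa] using congrArg f hv
    rw [LinearMap.mem_ker]
    by_contra hv0
    obtain rfl : μ = 1 := (mul_eq_right₀ hv0).1 hfv.symm
    rw [one_smul, add_eq_left] at hv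
    exact smul_ne_zero hv0 ha hv
  exact hf (LinearMap.ker_eq_top.1 (top_le_iff.1 (hdiag.ge.trans (iSup_le eigenspace_le_ker))))

lemma IsGenReflection.exists_eq_transvection {s : Module.End F V} (hs : IsGenReflection s) :
    ∃ (f : Dual F V) (a : V), f a ≠ 0 ∧ s = LinearMap.transvection f a := by
  obtain ⟨hdiag, hrank⟩ := hs
  let b : Basis Unit F (LinearMap.range (s - 1)) := Module.basisUnique Unit hrank
  let a : V := b ()
  let f : Dual F V := b.coord () ∘ₗ (s - 1).rangeRestrict
  have eq_transvection : s = LinearMap.transvection f a := LinearMap.ext fun v => by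
    have smul_eq : f v • a = s v - v := by
      simpa [f, a] using congrArg Subtype.val (b.sum_repr ((s - 1).rangeRestrict v))
    rw [LinearMap.transvection.apply, smul_eq, add_sub_cancel]
  have a_ne_zero : a ≠ 0 := fun h => b.ne_zero () (Subtype.ext h)
  have f_ne_zero : f ≠ 0 := fun h => by
    rw [eq_transvection, h, LinearMap.transvection.of_left_eq_zero, ← Module.End.one_eq_id,
      sub_self, LinearMap.range_zero, finrank_bot] at hrank
    exact zero_ne_one hrank
  exact ⟨f, a, (eq_transvection ▸ hdiag).apply_ne_zero_of_eq_transvection f_ne_zero a_ne_zero,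
    eq_transvection⟩

section Representation

variable {W : Type*} [Group W] {ρ : Representation F W V}

lemma apply_inv_mem_of_eq_transvection {w : W} {f : Dual F V} {a : V}
    (hw : ρ w = LinearMap.transvection f a) {N : Submodule F V} (hN : ∀ v ∈ N, ρ w v ∈ N) :
    ∀ v ∈ N, ρ w⁻¹ v ∈ N := fun v hv => by
  have apply_eq : ∀ u, ρ w u = u + f u • a := fun u => by rw [hw, LinearMap.transvection.apply]
  by_cases ha : a ∈ N
  · have inv_eq : ρ w⁻¹ v = v - f (ρ w⁻¹ v) • a := by
      rw [eq_sub_iff_add_eq, ← apply_eq, ρ.self_inv_apply]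
    exact inv_eq ▸ N.sub_mem hv (N.smul_mem _ ha)
  · have smul_mem : f v • a ∈ N := (N.add_mem_iff_right hv).1 (apply_eq v ▸ hN v hv)
    have hfv : f v = 0 := by
      by_contra h
      exact ha ((N.smul_mem_iff h).1 smul_mem)
    have fixed : ρ w v = v := by rw [apply_eq, hfv, zero_smul, add_zero]
    have inv_fixed : ρ w⁻¹ v = v := by rw [← fixed, ρ.inv_self_apply, fixed]
    exact inv_fixed.symm ▸ hv

lemma apply_mem_of_closure_range_eq_top {ι : Type*} {s : ι → W}
    (hgen : Subgroup.closure (Set.range s) = ⊤) {f : ι → Dual F V} {a : ι → V}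
    (hs : ∀ i, ρ (s i) = LinearMap.transvection (f i) (a i)) {N : Submodule F V}
    (hN : ∀ i, ∀ v ∈ N, LinearMap.transvection (f i) (a i) v ∈ N) (w : W) :
    ∀ v ∈ N, ρ w v ∈ N := by
  have generators_mem : ∀ i, ∀ v ∈ N, ρ (s i) v ∈ N := fun i => (hs i).symm ▸ hN i
  have hw : w ∈ Subgroup.closure (Set.range s) := hgen ▸ Subgroup.mem_top w
  induction hw using Subgroup.closure_induction'' with
  | mem _ hx =>
    obtain ⟨i, rfl⟩ := hx
    exact generators_mem i
  | inv_mem _ hx =>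
    obtain ⟨i, rfl⟩ := hx
    exact apply_inv_mem_of_eq_transvection (hs i) (generators_mem i)
  | one => simp
  | mul x y _ _ hx hy =>
    intro v hv
    rw [map_mul]
    exact hx _ (hy v hv)

end Representation

lemma nontrivial_exteriorPower {d : ℕ} (hd : (d : Cardinal) ≤ Module.rank F V) :
    Nontrivial ↥(⋀[F]^d V) := by
  obtain ⟨v, hv⟩ := Module.le_rank_iff.1 hd
  exact ⟨_, 0, (exteriorPower.ιMulti_family_linearIndependent_field d hv).ne_zero
    ⟨Finset.univ, by simp⟩⟩

lemma exteriorPower_eq_bot_or_eq_top_of_finrank_eq_one (hV : Module.finrank F V = 1) {d : ℕ}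
    (hd : (d : Cardinal) ≤ Module.rank F V) (U : Submodule F ↥(⋀[F]^d V)) : U = ⊥ ∨ U = ⊤ := by
  have : FiniteDimensional F V := Module.finite_of_finrank_eq_succ hV
  have hd1 : d ≤ 1 := by
    rw [← Module.finrank_eq_rank, hV] at hd
    exact_mod_cast hd
  have finrank_eq_one : Module.finrank F ↥(⋀[F]^d V) = 1 := by
    rw [exteriorPower.finrank_eq, hV]
    interval_cases d <;> rfl
  have := is_simple_module_of_finrank_eq_one (A := F) finrank_eq_one
  exact eq_bot_or_eq_top U

lemma exteriorPower_eq_bot_or_eq_top_of_extMap_transvection_mem [Nonempty κ]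
    {f : κ → Dual F V} {a : κ → V} (hfa : ∀ i, f i (a i) ≠ 0)
    (hirr : ∀ N : Submodule F V, (∀ i, ∀ v ∈ N, LinearMap.transvection (f i) (a i) v ∈ N) →
      N = ⊥ ∨ N = ⊤) {d : ℕ} {U : Submodule F ↥(⋀[F]^d V)}
    (hU : ∀ i, ∀ x ∈ U, extMap d (LinearMap.transvection (f i) (a i)) x ∈ U) :
    U = ⊥ ∨ U = ⊤ := by
  refine or_iff_not_imp_left.2 fun hbot => ?_
  obtain ⟨x, hx, hx0⟩ := U.ne_bot_iff.1 hbot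
  have le_map : ⋀[F]^d V ≤ U.map (⋀[F]^d V).subtype := by
    refine exteriorPower_le_of_map_transvection_mem hfa hirr ?_ ⟨x, hx, rfl⟩ x.2
      (by simpa using hx0)
    rintro i _ ⟨y, hy, rfl⟩
    exact ⟨_, hU i y hy, rfl⟩
  refine eq_top_iff.2 fun y _ => ?_
  obtain ⟨z, hz, hzy⟩ := le_map y.2
  exact Subtype.ext hzy ▸ hz

end Field

theorem stmt_15_general {F V W ι : Type*} [Field F] [AddCommGroup V] [Module F V] [Nontrivial V]
    [Group W] (s : ι → W) (hgen : Subgroup.closure (Set.range s) = ⊤) (ρ : Representation F W V)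
    (hirr : ∀ U : Submodule F V, (∀ w : W, ∀ v ∈ U, ρ w v ∈ U) → U = ⊥ ∨ U = ⊤)
    (hrefl : ∀ i, IsGenReflection (ρ (s i))) (d : ℕ) (hd : (d : Cardinal) ≤ Module.rank F V) :
    Nontrivial ↥(⋀[F]^d V) ∧
    ∀ U : Submodule F ↥(⋀[F]^d V),
      (∀ w : W, ∀ x ∈ U, extMap d (ρ w) x ∈ U) → U = ⊥ ∨ U = ⊤ := by
  refine ⟨nontrivial_exteriorPower hd, fun U hU => ?_⟩
  choose f a hfa hs using fun i => (hrefl i).exists_eq_transvection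
  have irreducible : ∀ N : Submodule F V,
      (∀ i, ∀ v ∈ N, LinearMap.transvection (f i) (a i) v ∈ N) → N = ⊥ ∨ N = ⊤ :=
    fun N hN => hirr N (apply_mem_of_closure_range_eq_top hgen hs hN)
  rcases isEmpty_or_nonempty ι with _ | _
  · have : IsSimpleModule F V :=
      (isSimpleModule_iff ..).2 ⟨fun N => irreducible N isEmptyElim⟩
    exact exteriorPower_eq_bot_or_eq_top_of_finrank_eq_one
      (isSimpleModule_iff_finrank_eq_one.1 this) hd U
  · refine exteriorPower_eq_bot_or_eq_top_of_extMap_transvection_mem hfa irreducible fun i => ?_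
    exact hs i ▸ hU (s i)

/-- Every exterior power of an irreducible reflection representation is irreducible. -/
theorem stmt_15 {F V W : Type*} [Field F] [CharZero F] [AddCommGroup V] [Module F V]
    [FiniteDimensional F V] [Nontrivial V] [Group W]
    (k : ℕ) (s : Fin k → W) (hgen : Subgroup.closure (Set.range s) = ⊤)
    (ρ : Representation F W V)
    (hirr : ∀ U : Submodule F V, (∀ w : W, ∀ v ∈ U, ρ w v ∈ U) → U = ⊥ ∨ U = ⊤)
    (hrefl : ∀ i, IsGenReflection (ρ (s i)))
    (n : ℕ) (hn : Module.finrank F V = n) (d : ℕ) (hd : d ≤ n) :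
    Nontrivial ↥(⋀[F]^d V) ∧
    ∀ U : Submodule F ↥(⋀[F]^d V),
      (∀ w : W, ∀ x ∈ U, extMap d (ρ w) x ∈ U) → U = ⊥ ∨ U = ⊤ :=
  stmt_15_general s hgen ρ hirr hrefl d
    (by rw [← Module.finrank_eq_rank, hn]; exact_mod_cast hd)
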